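/- arXiv:1007.1771 — 2 statements merged into one kernel-verified Lean document; each statement's English description precedes it below -/
import Mathlib

section
/- With probability at least 1 − 2M^{1−q}, every Group Lasso solution β̂ satisfies, for every group j ∈ {1,…,M}: (1/N)‖(XᵀX(β̂ − β*))^j‖ ≤ (3/2)·λ_j. -/
/-!
Write `y = Xβ* + W`, so that `XᵀX(β̂ - β*) = XᵀW - Xᵀ(y - Xβ̂)`, and bound the two terms groupwise.

* Optimality (`gradient_bound_of_isGLSol`): moving `β̂` along its own residual gradient
  `g = (Xᵀ(y - Xβ̂))^j` inside group `j` cannot lower the objective; to first order this says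
  `‖g‖² / N ≤ λ_j ‖g‖`, hence `‖g‖ / N ≤ λ_j`. This is deterministic.

* Noise (`chi_tail`, `group_noise_tail`): in an orthonormal eigenbasis `u_k` of `X_{G_j}ᵀ X_{G_j}`,
  the square `‖(XᵀW)^j‖²` is `∑ Y_k²` with `Y_k = ⟨X_{G_j} u_k, W⟩`. The `Y_k` are jointly Gaussian
  with orthogonal coefficient vectors, hence independent centred Gaussians (`linear_forms`), with
  variances `σ²‖X_{G_j} u_k‖²`, each at most `σ² N ⦀Ψ_j⦀` and adding up to `σ² N tr(Ψ_j)`. A Chernoff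
  bound with `E exp(s Y²) ≤ exp(s v + (s v)² / (1 - 2 s v))` (`mgf_sq_gaussian`) gives a
  Laurent–Massart type tail: `‖(XᵀW)^j‖ / N > λ_j / 2` has probability at most
  `exp(-q log M) = M^{-q}`.

A union bound over the `M` groups leaves an exceptional event of probability at most `M^{1-q}`;
outside it, `(1/N)‖(XᵀX(β̂ - β*))^j‖ ≤ λ_j / 2 + λ_j`.
-/

open MeasureTheory ProbabilityTheory Finset

noncomputable section

namespace GroupLasso

/-- The index set `{1,…,K}` partitioned into `M` groups, the `j`-th of size `Kj j`. -/
abbrev GIdx {M : ℕ} (Kj : Fin M → ℕ) : Type := (j : Fin M) × Fin (Kj j)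

/-- Euclidean norm `‖β^j‖` of the `j`-th group of coefficients. -/
def gnorm {M : ℕ} {Kj : Fin M → ℕ} (β : GIdx Kj → ℝ) (j : Fin M) : ℝ :=
  Real.sqrt (∑ t, (β ⟨j, t⟩) ^ 2)

/-- Trace of `Ψ_j = X_{G_j}ᵀ X_{G_j} / N`. -/
def trPsi {N M : ℕ} {Kj : Fin M → ℕ} (X : Matrix (Fin N) (GIdx Kj) ℝ) (j : Fin M) : ℝ :=
  (∑ t, ∑ i, (X i ⟨j, t⟩) ^ 2) / N

/-- Spectral norm of the positive semidefinite matrix `Ψ_j = X_{G_j}ᵀ X_{G_j} / N`,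
expressed as the supremum of its quadratic form over unit vectors supported on group `j`. -/
def specPsi {N M : ℕ} {Kj : Fin M → ℕ} (X : Matrix (Fin N) (GIdx Kj) ℝ) (j : Fin M) : ℝ :=
  sSup {x | ∃ v : GIdx Kj → ℝ, (∀ k : GIdx Kj, k.1 ≠ j → v k = 0) ∧ (∑ k, (v k) ^ 2 = 1) ∧
    x = (∑ i, (∑ k, X i k * v k) ^ 2) / N}

/-- The Group Lasso objective `(1/N)‖Xβ − y‖² + 2 Σ_j λ_j ‖β^j‖`. -/
def glObj {N M : ℕ} {Kj : Fin M → ℕ} (X : Matrix (Fin N) (GIdx Kj) ℝ) (y : Fin N → ℝ)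
    (lam : Fin M → ℝ) (β : GIdx Kj → ℝ) : ℝ :=
  (∑ i, (X.mulVec β i - y i) ^ 2) / N + 2 * ∑ j, lam j * gnorm β j

/-- `b` is a Group Lasso solution. -/
def IsGLSol {N M : ℕ} {Kj : Fin M → ℕ} (X : Matrix (Fin N) (GIdx Kj) ℝ) (y : Fin N → ℝ)
    (lam : Fin M → ℝ) (b : GIdx Kj → ℝ) : Prop :=
  ∀ β : GIdx Kj → ℝ, glObj X y lam b ≤ glObj X y lam β


/-! ### Moment generating function of a squared Gaussian -/

/-- Equivalent to `-log (1 - y) / 2 ≤ y / 2 + y² / (4 (1 - y))`. The cruder `log x ≤ x - 1` would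
double the second-order term, which is too weak for the tail bound; the quadratic lower bound on
the exponential is sharp enough. -/
lemma inv_sqrt_le {y : ℝ} (h0 : 0 ≤ y) (h1 : y < 1) :
    (√(1 - y))⁻¹ ≤ Real.exp (y / 2 + y ^ 2 / (4 * (1 - y))) := by
  have h2 : 0 < 1 - y := by linarith
  have h3 : (1 - y)⁻¹ ≤ Real.exp (y + y ^ 2 / (2 * (1 - y))) := by
    refine le_trans ?_ (Real.quadratic_le_exp_of_nonneg (by positivity))
    have h4 : 1 + (y + y ^ 2 / (2 * (1 - y))) + (y + y ^ 2 / (2 * (1 - y))) ^ 2 / 2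
        = (1 - y)⁻¹ + (y ^ 2 / (2 * (1 - y))) ^ 2 / 2 := by
      field_simp
      ring
    rw [h4]
    have := sq_nonneg (y ^ 2 / (2 * (1 - y)))
    linarith
  rw [← Real.sqrt_inv]
  refine (Real.sqrt_le_sqrt h3).trans (le_of_eq ?_)
  rw [← Real.exp_half]
  congr 1
  field_simp
  ring

/-- The exact value is `(1 - 2 s v)^(-1/2)`; the bound is the one convenient for a Chernoff bound.
-/
lemma mgf_sq_gaussian (v : NNReal) {s : ℝ} (hs : 0 ≤ s) (h : 2 * s * v < 1) :
    Integrable (fun x : ℝ => Real.exp (s * x ^ 2)) (gaussianReal 0 v) ∧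
    ∫ x, Real.exp (s * x ^ 2) ∂(gaussianReal 0 v) ≤
      Real.exp (s * v + (s * v) ^ 2 / (1 - 2 * s * v)) := by
  by_cases hv : v = 0
  · subst hv
    rw [gaussianReal_zero_var]
    refine ⟨integrable_dirac (by simp), ?_⟩
    simp
  have hv' : (0 : ℝ) < v := by positivity
  have h2 : 0 < 1 - 2 * s * v := by linarith
  set b : ℝ := (1 - 2 * s * v) / (2 * v) with hb
  have hbpos : 0 < b := by positivity
  have key : ∀ x : ℝ, gaussianPDFReal 0 v x * Real.exp (s * x ^ 2)
      = (√(2 * Real.pi * v))⁻¹ * Real.exp (-b * x ^ 2) := by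
    intro x
    rw [gaussianPDFReal, mul_assoc, ← Real.exp_add]
    congr 2
    rw [hb]; field_simp; ring
  constructor
  · rw [gaussianReal_of_var_ne_zero 0 hv,
      integrable_withDensity_iff_integrable_smul' (measurable_gaussianPDF 0 v)
        (ae_of_all _ fun _ => gaussianPDF_lt_top)]
    simp only [toReal_gaussianPDF, smul_eq_mul, key]
    exact (integrable_exp_neg_mul_sq hbpos).const_mul _
  · rw [integral_gaussianReal_eq_integral_smul hv]
    simp only [smul_eq_mul, key]
    rw [integral_const_mul, integral_gaussian]
    have e : (√(2 * Real.pi * v))⁻¹ * √(Real.pi / b) = (√(1 - 2 * s * v))⁻¹ := by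
      rw [← Real.sqrt_inv, ← Real.sqrt_inv, ← Real.sqrt_mul (by positivity)]
      congr 1
      rw [hb]; field_simp
    rw [e]
    refine (inv_sqrt_le (by positivity) h).trans (le_of_eq ?_)
    congr 1
    field_simp
    ring

/-! ### Tail bound for a Gaussian quadratic form -/

/-- A basis of right singular vectors of `B`: the eigenvectors of `Bᵀ B`. -/
lemma exists_basis {N n : ℕ} (B : Matrix (Fin N) (Fin n) ℝ) :
    ∃ u : OrthonormalBasis (Fin n) ℝ (EuclideanSpace ℝ (Fin n)),
      ∀ k l, k ≠ l → ∑ i, (B.mulVec (u k)) i * (B.mulVec (u l)) i = 0 := by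
  have hS : (B.transpose * B).IsHermitian := by
    simpa using Matrix.isHermitian_conjTranspose_mul_self B
  refine ⟨hS.eigenvectorBasis, fun k l hkl => ?_⟩
  have h1 := hS.mulVec_eigenvectorBasis l
  have h2 := hS.eigenvectorBasis.orthonormal.2 hkl
  change (B.mulVec (hS.eigenvectorBasis k)) ⬝ᵥ (B.mulVec (hS.eigenvectorBasis l)) = 0
  have h3 : (WithLp.ofLp (hS.eigenvectorBasis k)) ⬝ᵥ (WithLp.ofLp (hS.eigenvectorBasis l)) = 0 := by
    simpa [EuclideanSpace.inner_eq_star_dotProduct, dotProduct_comm] using h2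
  rw [Matrix.dotProduct_mulVec, Matrix.vecMul_mulVec, ← Matrix.dotProduct_mulVec, h1,
    dotProduct_smul, h3, smul_zero]

/-- Linear forms of white noise with pairwise orthogonal coefficient vectors are uncorrelated and
jointly Gaussian, hence independent. -/
lemma linear_forms {N n : ℕ} (v : NNReal) (a : Fin n → Fin N → ℝ)
    (ha : ∀ k l, k ≠ l → ∑ i, a k i * a l i = 0) :
    iIndepFun (fun k (w : Fin N → ℝ) => ∑ i, a k i * w i)
      (Measure.pi fun _ : Fin N => gaussianReal 0 v) ∧
    ∀ k, (Measure.pi fun _ : Fin N => gaussianReal 0 v).map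
      (fun w : Fin N → ℝ => ∑ i, a k i * w i) =
        gaussianReal 0 ((∑ i, a k i ^ 2) * v).toNNReal := by
  set P := Measure.pi fun _ : Fin N => gaussianReal 0 v with hP
  have hlaw : ∀ i, HasLaw (fun w : Fin N → ℝ => w i) (gaussianReal 0 v) P :=
    fun i => ⟨(measurable_pi_apply i).aemeasurable, (measurePreserving_eval _ i).map_eq⟩
  have hg : ∀ i, HasGaussianLaw (fun w : Fin N → ℝ => w i) P := fun i => (hlaw i).hasGaussianLaw
  have hind : iIndepFun (fun i (w : Fin N → ℝ) => w i) P :=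
    iIndepFun_pi (X := fun _ => id) (fun _ => aemeasurable_id)
  have hG : HasGaussianLaw (fun w : Fin N → ℝ => w) P := hind.hasGaussianLaw hg
  have hcov : ∀ i j, cov[fun w : Fin N → ℝ => w i, fun w => w j; P] = if i = j then (v : ℝ) else 0 := by
    intro i j
    split_ifs with hij
    · subst hij
      rw [covariance_self (measurable_pi_apply i).aemeasurable, (hlaw i).variance_eq]
      simp
    · exact (hind.indepFun hij).covariance_eq_zero (hg i).memLp_two (hg j).memLp_two
  have hcovY : ∀ k l, cov[fun w : Fin N → ℝ => ∑ i, a k i * w i, fun w => ∑ i, a l i * w i; P]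
      = (∑ i, a k i * a l i) * v := by
    intro k l
    rw [covariance_fun_sum_fun_sum (fun i => (hg i).memLp_two.const_mul _)
      (fun i => (hg i).memLp_two.const_mul _)]
    simp only [covariance_const_mul_left, covariance_const_mul_right, hcov]
    simp [Finset.sum_mul, mul_assoc, mul_left_comm]
  have hY : HasGaussianLaw (fun w : Fin N → ℝ => fun k => ∑ i, a k i * w i) P := by
    have := hG.map (LinearMap.toContinuousLinearMap (Matrix.mulVecLin (Matrix.of a)))
    exact this
  refine ⟨hY.iIndepFun_of_covariance_eq_zero fun k l hkl => ?_, fun k => ?_⟩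
  · rw [hcovY, ha k l hkl, zero_mul]
  · rw [(hY.eval k).map_eq_gaussianReal]
    have hm : ∫ w : Fin N → ℝ, ∑ i, a k i * w i ∂P = 0 := by
      rw [integral_finsetSum _ (fun i _ => (hg i).integrable.const_mul _)]
      refine Finset.sum_eq_zero fun i _ => ?_
      rw [integral_const_mul, (hlaw i).integral_eq]
      simp
    congr 1
    rw [← covariance_self (hY.eval k).aemeasurable, hcovY]
    simp [pow_two]

/-- Upper tail of `‖Bᵀ w‖²` for white noise `w` of variance `v`, where `T = tr(Bᵀ B)` and `L` bounds
the spectral norm of `Bᵀ B`. -/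
lemma chi_tail {N n : ℕ} (hn : 1 ≤ n) (B : Matrix (Fin N) (Fin n) ℝ) (v : NNReal) (hv : v ≠ 0)
    {L T t : ℝ} (ht : 0 < t) (hT : T = ∑ i, ∑ k, B i k ^ 2)
    (hL : ∀ u : Fin n → ℝ, ∑ k, u k ^ 2 = 1 → ∑ i, (B.mulVec u i) ^ 2 ≤ L) :
    (Measure.pi fun _ : Fin N => gaussianReal 0 v).real
      {w | v * (T + 2 * L * (2 * t + √(n * t))) < ∑ k, (∑ i, B i k * w i) ^ 2}
      ≤ Real.exp (-t) := by
  obtain ⟨u, hu⟩ := exists_basis B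
  set P := Measure.pi fun _ : Fin N => gaussianReal 0 v with hP
  set a : Fin n → Fin N → ℝ := fun k => B.mulVec (u k) with ha
  set d : Fin n → ℝ := fun k => ∑ i, a k i ^ 2 with hd
  have hd0 : ∀ k, 0 ≤ d k := fun k => Finset.sum_nonneg fun i _ => sq_nonneg _
  have hdL : ∀ k, d k ≤ L := fun k => hL _ (by
    have := u.orthonormal.1 k
    rw [EuclideanSpace.norm_eq, Real.sqrt_eq_one] at this
    simpa using this)
  have parseval : ∀ z : Fin n → ℝ, ∑ k, (∑ m, u k m * z m) ^ 2 = ∑ m, z m ^ 2 := by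
    intro z
    have := u.sum_sq_norm_inner_right (WithLp.toLp 2 z)
    rw [EuclideanSpace.norm_sq_eq] at this
    simpa [EuclideanSpace.inner_eq_star_dotProduct, dotProduct, mul_comm] using this
  have hdT : ∑ k, d k = T := by
    rw [hT, hd, Finset.sum_comm]
    refine Finset.sum_congr rfl fun i _ => ?_
    rw [← parseval (B i)]
    refine Finset.sum_congr rfl fun k _ => ?_
    simp [ha, Matrix.mulVec, dotProduct, mul_comm]
  have hQ : ∀ w : Fin N → ℝ, ∑ k, (∑ i, B i k * w i) ^ 2 = ∑ k, (∑ i, a k i * w i) ^ 2 := by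
    intro w
    rw [← parseval fun k => ∑ i, B i k * w i]
    refine Finset.sum_congr rfl fun k _ => ?_
    congr 1
    simp only [ha, Matrix.mulVec, dotProduct, Finset.mul_sum, Finset.sum_mul]
    rw [Finset.sum_comm]
    refine Finset.sum_congr rfl fun i _ => Finset.sum_congr rfl fun m _ => by ring
  have hT0 : 0 ≤ T := hdT ▸ Finset.sum_nonneg fun k _ => hd0 k
  have hL0 : 0 ≤ L := (hd0 ⟨0, hn⟩).trans (hdL _)
  -- If `L = 0` the quadratic form vanishes identically; otherwise `s = x / (L v)` makes sense.
  rcases hL0.eq_or_lt with hL0 | hLpos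
  · have hd' : ∀ k i, a k i = 0 := by
      intro k i
      have h1 : d k = 0 := le_antisymm (hL0 ▸ hdL k) (hd0 k)
      have := (Finset.sum_eq_zero_iff_of_nonneg fun i _ => sq_nonneg (a k i)).1 h1 i (mem_univ i)
      simpa using this
    have : {w : Fin N → ℝ | v * (T + 2 * L * (2 * t + √(n * t))) < ∑ k, (∑ i, B i k * w i) ^ 2}
        = ∅ := by
      ext w
      simp only [Set.mem_ofPred_eq, Set.mem_empty_iff_false, iff_false, not_lt, hQ, hd', ← hL0]
      simp only [zero_mul, Finset.sum_const_zero, mul_zero, add_zero]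
      simpa using by positivity
    rw [this]
    simpa using (Real.exp_pos _).le
  obtain ⟨hind, hlaw⟩ := linear_forms v a hu
  rw [← hP] at hind hlaw
  have hv' : (0 : ℝ) < v := by positivity
  have hn' : (0 : ℝ) < n := by exact_mod_cast hn
  set p := √(n : ℝ) with hp
  set r := √t with hr
  have hp0 : 0 < p := Real.sqrt_pos.2 hn'
  have hr0 : 0 < r := Real.sqrt_pos.2 ht
  have hp2 : p ^ 2 = n := Real.sq_sqrt hn'.le
  have hr2 : r ^ 2 = t := Real.sq_sqrt ht.le
  have hpr : √(n * t) = p * r := Real.sqrt_mul hn'.le _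
  -- `x = s L v` is the minimiser of the Laurent–Massart exponent `-2x(√(n t) + t) + n x² / (1 - 2x)`.
  set x := r / (p + 2 * r) with hx
  have hx0 : 0 < x := by positivity
  have hx1 : 1 - 2 * x = p / (p + 2 * r) := by rw [hx]; field_simp; ring
  have hx1' : 0 < 1 - 2 * x := by rw [hx1]; positivity
  set s := x / (L * v) with hs
  have hs0 : 0 < s := by positivity
  have hsL : s * (L * v) = x := by rw [hs]; field_simp
  set Z : Fin n → (Fin N → ℝ) → ℝ := fun k w => (∑ i, a k i * w i) ^ 2 with hZ
  have hZm : ∀ k, Measurable (Z k) := fun k => by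
    refine Measurable.pow_const (Finset.measurable_sum _ fun i _ => ?_) 2
    exact (measurable_pi_apply i).const_mul _
  have hZi : iIndepFun Z P := hind.comp (fun _ y => y ^ 2) fun _ => by fun_prop
  have hsd : ∀ k, s * (d k * v) ≤ x := fun k => by
    rw [← hsL]
    gcongr
    exact hdL k
  have hZmgf : ∀ k, Integrable (fun w => Real.exp (s * Z k w)) P ∧
      mgf (Z k) P s ≤ Real.exp (s * (d k * v) + x ^ 2 / (1 - 2 * x)) := by
    intro k
    have hc : (((d k * v).toNNReal : NNReal) : ℝ) = d k * v :=
      Real.coe_toNNReal _ (mul_nonneg (hd0 k) hv'.le)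
    obtain ⟨h1, h2⟩ := mgf_sq_gaussian (d k * v).toNNReal hs0.le
      (by rw [hc]; nlinarith [hsd k])
    have hm : Measurable (fun w : Fin N → ℝ => ∑ i, a k i * w i) :=
      Finset.measurable_sum _ fun i _ => (measurable_pi_apply i).const_mul _
    rw [← hlaw k] at h1
    constructor
    · exact (integrable_map_measure (by fun_prop) hm.aemeasurable).1 h1
    · rw [← hlaw k, integral_map hm.aemeasurable (by fun_prop), hc, mul_assoc 2 s] at h2
      refine h2.trans (Real.exp_le_exp.2 ?_)
      have h0 : 0 ≤ s * (d k * v) := mul_nonneg hs0.le (mul_nonneg (hd0 k) hv'.le)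
      have := hsd k
      gcongr
  have hint : Integrable (fun w => Real.exp (s * (∑ k, Z k) w)) P :=
    hZi.integrable_exp_mul_sum hZm fun k _ => (hZmgf k).1
  have hch := measure_ge_le_exp_mul_mgf (v * (T + 2 * L * (2 * t + √(n * t)))) hs0.le hint
  rw [hZi.mgf_sum hZm] at hch
  have hprod : ∏ k, mgf (Z k) P s ≤ Real.exp (s * (T * v) + n * (x ^ 2 / (1 - 2 * x))) := by
    refine (Finset.prod_le_prod (fun k _ => mgf_nonneg) fun k _ => (hZmgf k).2).trans (le_of_eq ?_)
    rw [← Real.exp_sum, Finset.sum_add_distrib, ← Finset.mul_sum, ← Finset.sum_mul, hdT]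
    simp
  calc _ ≤ P.real {w | v * (T + 2 * L * (2 * t + √(n * t))) ≤ (∑ k, Z k) w} := by
        refine measureReal_mono (fun w hw => ?_)
        simp only [Set.mem_ofPred_eq, hQ] at hw ⊢
        simpa [hZ] using hw.le
    _ ≤ _ := hch
    _ ≤ _ := mul_le_mul_of_nonneg_left hprod (Real.exp_pos _).le
    _ ≤ Real.exp (-t) := by
        rw [← Real.exp_add]
        refine Real.exp_le_exp.2 ?_
        have e1 : -s * (v * (T + 2 * L * (2 * t + √(n * t)))) +
            (s * (T * v) + n * (x ^ 2 / (1 - 2 * x)))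
            = - 2 * (s * (L * v)) * (2 * t + √(n * t)) + n * (x ^ 2 / (1 - 2 * x)) := by ring
        have e2 : - 2 * x * (2 * r ^ 2 + p * r) + p ^ 2 * (x ^ 2 / (1 - 2 * x))
            = -r ^ 2 - 2 * r ^ 3 / (p + 2 * r) := by
          rw [hx1, hx]; field_simp; ring
        rw [e1, hsL, hpr, ← hr2, ← hp2, e2]
        have : 0 ≤ 2 * r ^ 3 / (p + 2 * r) := by positivity
        linarith

/-! ### Group norms and the optimality condition -/

lemma gnorm_nonneg {M : ℕ} {Kj : Fin M → ℕ} (β : GIdx Kj → ℝ) (j : Fin M) : 0 ≤ gnorm β j :=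
  Real.sqrt_nonneg _

lemma gnorm_sq {M : ℕ} {Kj : Fin M → ℕ} (β : GIdx Kj → ℝ) (j : Fin M) :
    gnorm β j ^ 2 = ∑ t, β ⟨j, t⟩ ^ 2 :=
  Real.sq_sqrt (Finset.sum_nonneg fun _ _ => sq_nonneg _)

lemma gnorm_eq_norm {M : ℕ} {Kj : Fin M → ℕ} (β : GIdx Kj → ℝ) (j : Fin M) :
    gnorm β j = ‖WithLp.toLp 2 (fun t => β ⟨j, t⟩)‖ := by
  simp [gnorm, EuclideanSpace.norm_eq]

lemma gnorm_add_smul_le {M : ℕ} {Kj : Fin M → ℕ} (β γ : GIdx Kj → ℝ) (s : ℝ) (j : Fin M) :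
    gnorm (β + s • γ) j ≤ gnorm β j + |s| * gnorm γ j := by
  simp only [gnorm_eq_norm]
  rw [← Real.norm_eq_abs, ← norm_smul]
  exact norm_add_le (WithLp.toLp 2 (fun t => β ⟨j, t⟩)) (s • WithLp.toLp 2 (fun t => γ ⟨j, t⟩))

/-- First-order optimality condition of the Group Lasso: the group-`j` gradient of the quadratic loss
at a solution has norm at most `λ_j`. -/
lemma gradient_bound_of_isGLSol {N M : ℕ} {Kj : Fin M → ℕ} (hN : 1 ≤ N)
    (X : Matrix (Fin N) (GIdx Kj) ℝ) (y : Fin N → ℝ) (lam : Fin M → ℝ)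
    (hlam : ∀ j, 0 < lam j) (b : GIdx Kj → ℝ) (hb : IsGLSol X y lam b) (j : Fin M) :
    gnorm (X.transpose.mulVec (y - X.mulVec b)) j / N ≤ lam j := by
  classical
  have hN' : (0 : ℝ) < N := by exact_mod_cast hN
  set r := y - X.mulVec b with hr
  set g := X.transpose.mulVec r with hg
  set G := gnorm g j with hG
  have hG0 : 0 ≤ G := gnorm_nonneg _ _
  -- The direction of perturbation: the gradient restricted to group `j`.
  set h : GIdx Kj → ℝ := fun k => if k.1 = j then g k else 0 with hh
  set C := ∑ i, (X.mulVec h i) ^ 2 with hC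
  have hC0 : 0 ≤ C := Finset.sum_nonneg fun _ _ => sq_nonneg _
  have hcross : ∑ i, r i * X.mulVec h i = G ^ 2 := by
    change r ⬝ᵥ X.mulVec h = _
    rw [Matrix.dotProduct_mulVec, ← Matrix.mulVec_transpose, ← hg, hG, gnorm_sq]
    simp only [dotProduct, hh, mul_ite, mul_zero]
    rw [Fintype.sum_sigma, Finset.sum_eq_single j]
    · simp [pow_two]
    · intro j' _ hj'
      simp [hj']
    · simp
  have hhj : gnorm h j = G := by simp [hG, gnorm, hh]
  have hmain : ∀ s : ℝ, 0 < s → 2 * (G ^ 2 / N - lam j * G) ≤ s * C / N := by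
    intro s hs
    have h1 := hb (b + s • h)
    unfold glObj at h1
    have e1 : ∑ i, (X.mulVec (b + s • h) i - y i) ^ 2
        = ∑ i, (X.mulVec b i - y i) ^ 2 - 2 * s * G ^ 2 + s ^ 2 * C := by
      rw [← hcross, hC, Finset.mul_sum, Finset.mul_sum, ← Finset.sum_sub_distrib,
        ← Finset.sum_add_distrib]
      refine Finset.sum_congr rfl fun i _ => ?_
      rw [Matrix.mulVec_add, Matrix.mulVec_smul]
      simp only [Pi.add_apply, Pi.smul_apply, smul_eq_mul, hr, Pi.sub_apply]
      ring
    have e2 : ∑ j', lam j' * gnorm (b + s • h) j' ≤ ∑ j', lam j' * gnorm b j' + lam j * (s * G) := by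
      have : lam j * (s * G) = ∑ j', if j' = j then lam j * (s * G) else 0 := by simp
      rw [this, ← Finset.sum_add_distrib]
      refine Finset.sum_le_sum fun j' _ => ?_
      split_ifs with hj'
      · subst hj'
        rw [← mul_add]
        refine mul_le_mul_of_nonneg_left ?_ (hlam _).le
        have := gnorm_add_smul_le b h s j'
        rwa [abs_of_pos hs, hhj] at this
      · simp [gnorm, hh, hj']
    rw [e1, add_div, sub_div] at h1
    have h2 : 0 ≤ s * (s * C / N - 2 * (G ^ 2 / N - lam j * G)) := by
      have : s * (s * C / N - 2 * (G ^ 2 / N - lam j * G))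
        = s ^ 2 * C / N - 2 * s * G ^ 2 / N + 2 * (lam j * (s * G)) := by ring
      rw [this]; linarith
    have := nonneg_of_mul_nonneg_right h2 hs
    linarith
  have hD : G ^ 2 / N - lam j * G ≤ 0 := by
    by_contra! hD
    -- A step this short makes the quadratic term smaller than the first-order gain.
    have := hmain ((G ^ 2 / N - lam j * G) * N / (C + 1)) (by positivity)
    have e : (G ^ 2 / N - lam j * G) * N / (C + 1) * C / N
        = (G ^ 2 / N - lam j * G) * (C / (C + 1)) := by field_simp
    rw [e] at this
    have hc : C / (C + 1) ≤ 1 := by rw [div_le_one (by positivity)]; linarith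
    nlinarith
  rcases hG0.eq_or_lt with h0 | h0
  · rw [← h0, zero_div]; exact (hlam j).le
  · have e : G * (G / N) ≤ G * lam j := by
      have : G * (G / N) = G ^ 2 / N := by ring
      linarith
    exact le_of_mul_le_mul_left e h0

/-! ### The noise term of a group -/

/-- `specPsi` is a supremum of reals, so this also needs the boundedness of the set; that follows
from the Cauchy–Schwarz inequality. A unit vector of group `j` is extended by zero to all
coordinates. -/
lemma quad_le_specPsi {N M : ℕ} {Kj : Fin M → ℕ} (hN : 1 ≤ N)
    (X : Matrix (Fin N) (GIdx Kj) ℝ) (j : Fin M)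
    (u : Fin (Kj j) → ℝ) (hu : ∑ k, u k ^ 2 = 1) :
    ∑ i, ((X.submatrix id (Sigma.mk j)).mulVec u i) ^ 2 ≤ N * specPsi X j := by
  classical
  have hN' : (0 : ℝ) < N := by exact_mod_cast hN
  rw [← div_le_iff₀' hN']
  refine le_csSup ⟨(∑ i, ∑ k, X i k ^ 2) / N, ?_⟩ ?_
  · rintro x ⟨v, -, hv, rfl⟩
    gcongr with i
    calc _ ≤ (∑ k, X i k ^ 2) * ∑ k, v k ^ 2 := Finset.sum_mul_sq_le_sq_mul_sq _ _ _
      _ = _ := by rw [hv, mul_one]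
  · refine ⟨fun k => if hk : k.1 = j then u (hk ▸ k.2) else 0, fun k hk => by simp [hk], ?_, ?_⟩
    · rw [Fintype.sum_sigma, Finset.sum_eq_single j]
      · simpa using hu
      · intro j' _ hj'
        simp [hj']
      · simp
    · congr 1
      refine Finset.sum_congr rfl fun i _ => ?_
      congr 1
      rw [Fintype.sum_sigma, Finset.sum_eq_single j]
      · simp [Matrix.mulVec, dotProduct]
      · intro j' _ hj'
        simp [hj']
      · simp

/-- `chi_tail` for `B = X_{G_j}`, with `T = N tr(Ψ_j)` and `L = N ⦀Ψ_j⦀`. -/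
lemma group_noise_tail {N M : ℕ} {Kj : Fin M → ℕ} (hN : 1 ≤ N)
    (X : Matrix (Fin N) (GIdx Kj) ℝ) (j : Fin M) (hKj : 1 ≤ Kj j) (v : NNReal) (hv : v ≠ 0)
    {t : ℝ} (ht : 0 < t) :
    (Measure.pi fun _ : Fin N => gaussianReal 0 v).real
      {w | v * (N * trPsi X j + 2 * (N * specPsi X j) * (2 * t + √(Kj j * t)))
        < ∑ k, (∑ i, X i ⟨j, k⟩ * w i) ^ 2} ≤ Real.exp (-t) := by
  have hN' : (N : ℝ) ≠ 0 := by exact_mod_cast (by omega : N ≠ 0)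
  have hT : N * trPsi X j = ∑ i, ∑ k, (X.submatrix id (Sigma.mk j)) i k ^ 2 := by
    rw [trPsi, mul_div_cancel₀ _ hN', Finset.sum_comm]
    simp only [Matrix.submatrix_apply, id]
  have hL := quad_le_specPsi hN X j
  have hB : ∀ i k, X.submatrix id (Sigma.mk j) i k = X i ⟨j, k⟩ := fun _ _ => rfl
  generalize X.submatrix id (Sigma.mk j) = B at hT hL hB
  have := chi_tail hKj B v hv ht hT hL
  simpa only [hB] using this

/-- with probability at least `1 − 2M^{1−q}`, every Group Lasso solution `β̂`
satisfies `(1/N)‖(XᵀX(β̂ − β*))^j‖ ≤ (3/2)λ_j` for every group `j`. -/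
theorem group_lasso_groupwise_gradient_bound
    {N M : ℕ} {Kj : Fin M → ℕ} (hM : 2 ≤ M) (hN : 1 ≤ N) (hKj : ∀ j, 1 ≤ Kj j)
    (X : Matrix (Fin N) (GIdx Kj) ℝ) (βstar : GIdx Kj → ℝ)
    {Ω : Type*} [MeasurableSpace Ω] (μ : Measure Ω) [IsProbabilityMeasure μ]
    (W : Ω → Fin N → ℝ) (σ : ℝ) (hσ : 0 < σ)
    (hW : Measure.map W μ = Measure.pi fun _ : Fin N => gaussianReal 0 (σ ^ 2).toNNReal)
    (q : ℝ) (hq : 1 < q) (lam : Fin M → ℝ) (hlam_pos : ∀ j, 0 < lam j)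
    (hlam : ∀ j, 2 * σ / Real.sqrt N *
      Real.sqrt (trPsi X j + 2 * specPsi X j *
        (2 * q * Real.log M + Real.sqrt (Kj j * q * Real.log M))) ≤ lam j)
    :
    ∃ A : Set Ω, MeasurableSet A ∧ 1 - 2 * (M : ℝ) ^ ((1 : ℝ) - q) ≤ (μ A).toReal ∧
      ∀ ω ∈ A, ∀ b : GIdx Kj → ℝ,
        IsGLSol X (fun i => X.mulVec βstar i + W ω i) lam b →
        ∀ j : Fin M,
          gnorm (X.transpose.mulVec (X.mulVec (b - βstar))) j / N ≤ 3 / 2 * lam j := by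
  classical
  have hN' : (0 : ℝ) < N := by exact_mod_cast hN
  have hM' : (1 : ℝ) < M := by exact_mod_cast hM
  have hlog : 0 < Real.log M := Real.log_pos hM'
  set t := q * Real.log M with ht
  have ht0 : 0 < t := by positivity
  set v : NNReal := (σ ^ 2).toNNReal with hv
  have hvσ : (v : ℝ) = σ ^ 2 := Real.coe_toNNReal _ (sq_nonneg σ)
  have hv0 : v ≠ 0 := by
    intro h
    have : (v : ℝ) = 0 := by rw [h]; rfl
    rw [hvσ] at this
    exact hσ.ne' (by simpa using this)
  set P := Measure.pi fun _ : Fin N => gaussianReal 0 v with hP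
  set E : Fin M → Set (Fin N → ℝ) := fun j =>
    {w | v * (N * trPsi X j + 2 * (N * specPsi X j) * (2 * t + √(Kj j * t)))
      < ∑ k, (∑ i, X i ⟨j, k⟩ * w i) ^ 2} with hE
  have hEm : ∀ j, MeasurableSet (E j) := fun j => by
    refine measurableSet_lt measurable_const ?_
    refine Finset.measurable_sum _ fun k _ => Measurable.pow_const ?_ 2
    exact Finset.measurable_sum _ fun i _ => (measurable_pi_apply i).const_mul _
  have hEP : ∀ j, P.real (E j) ≤ Real.exp (-t) := fun j =>
    group_noise_tail hN X j (hKj j) v hv0 ht0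
  have hUm : MeasurableSet (⋃ j, E j) := MeasurableSet.iUnion hEm
  have hUP : P.real (⋃ j, E j) ≤ (M : ℝ) ^ (1 - q) := by
    refine (measureReal_iUnion_fintype_le _).trans ((Finset.sum_le_sum fun j _ => hEP j).trans ?_)
    rw [Finset.sum_const, Finset.card_univ, Fintype.card_fin, nsmul_eq_mul,
      Real.rpow_sub (by positivity), Real.rpow_one, Real.rpow_def_of_pos (by positivity), ht,
      Real.exp_neg, mul_comm q, div_eq_mul_inv]
  -- A map that is not almost everywhere measurable has zero image measure, contradicting `hW`.
  have hWm : AEMeasurable W μ := by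
    refine AEMeasurable.of_map_ne_zero ?_
    rw [hW]
    exact IsProbabilityMeasure.ne_zero _
  -- `W` is only almost everywhere measurable, hence the measurable hull of the bad event.
  refine ⟨(toMeasurable μ (W ⁻¹' ⋃ j, E j))ᶜ, (measurableSet_toMeasurable _ _).compl, ?_, ?_⟩
  · change _ ≤ μ.real _
    rw [probReal_compl_eq_one_sub (measurableSet_toMeasurable _ _), measureReal_def,
      measure_toMeasurable, ← Measure.map_apply_of_aemeasurable hWm hUm, hW, ← measureReal_def]
    have : (0 : ℝ) ≤ (M : ℝ) ^ (1 - q) := by positivity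
    linarith
  · intro ω hω b hb j
    have hω' : W ω ∉ E j := fun h =>
      hω (subset_toMeasurable μ _ (Set.mem_iUnion.2 ⟨j, h⟩ : ω ∈ W ⁻¹' ⋃ j, E j))
    have hkkt := gradient_bound_of_isGLSol hN X _ lam hlam_pos b hb j
    set y : Fin N → ℝ := fun i => X.mulVec βstar i + W ω i with hy
    have hnoise : gnorm (X.transpose.mulVec (W ω)) j / N ≤ lam j / 2 := by
      have h1 : gnorm (X.transpose.mulVec (W ω)) j ≤ √(v * (N * trPsi X j +
          2 * (N * specPsi X j) * (2 * t + √(Kj j * t)))) := by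
        refine Real.sqrt_le_sqrt ?_
        simpa [hE, Matrix.mulVec, dotProduct] using hω'
      have h2 := hlam j
      have e1 : (v : ℝ) * (N * trPsi X j + 2 * (N * specPsi X j) * (2 * t + √(Kj j * t)))
          = (σ * √N) ^ 2 * (trPsi X j + 2 * specPsi X j *
            (2 * q * Real.log M + √(Kj j * q * Real.log M))) := by
        rw [hvσ, mul_pow, Real.sq_sqrt hN'.le, ht, ← mul_assoc (Kj j : ℝ)]
        ring
      rw [e1, Real.sqrt_mul (sq_nonneg _), Real.sqrt_sq (by positivity)] at h1
      set S := √(trPsi X j + 2 * specPsi X j *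
            (2 * q * Real.log M + √(Kj j * q * Real.log M)))
      have e2 : σ * √N * S / N = (2 * σ / √N * S) / 2 := by
        have hs : √(N : ℝ) ≠ 0 := (Real.sqrt_pos.2 hN').ne'
        have hs2 : √(N : ℝ) ^ 2 = N := Real.sq_sqrt hN'.le
        field_simp
        rw [hs2, mul_comm]
      calc _ ≤ σ * √N * S / N := by gcongr
        _ = (2 * σ / √N * S) / 2 := e2
        _ ≤ _ := by gcongr
    have hdec : X.transpose.mulVec (X.mulVec (b - βstar))
        = X.transpose.mulVec (W ω) + (-1 : ℝ) • X.transpose.mulVec (y - X.mulVec b) := by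
      rw [← Matrix.mulVec_smul, ← Matrix.mulVec_add]
      congr 1
      ext i
      simp only [Matrix.mulVec_sub, hy, Pi.add_apply, Pi.sub_apply, Pi.smul_apply, smul_eq_mul]
      ring
    rw [hdec]
    have htri := gnorm_add_smul_le (X.transpose.mulVec (W ω))
      (X.transpose.mulVec (y - X.mulVec b)) (-1) j
    rw [abs_neg, abs_one, one_mul] at htri
    calc _ ≤ (gnorm (X.transpose.mulVec (W ω)) j
          + gnorm (X.transpose.mulVec (y - X.mulVec b)) j) / N := by gcongr
      _ ≤ 3 / 2 * lam j := by rw [add_div]; linarith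

end GroupLasso
end
end

section
/- With probability at least 1 − 2M^{1−q}, every Group Lasso solution β̂ satisfies M(β̂) ≤ (4 φ_max)/(λ_min² N) · ‖X(β̂ − β*)‖², where λ_min = min_{j=1,…,M} λ_j and φ_max is the maximal eigenvalue of XᵀX/N. -/
/-!
The bound splits into a deterministic and a probabilistic half, separated by the event that
`‖X_{G_j}ᵀ W‖ ≤ N λ_j / 2` for every group `j`.

*On this event* (`deterministic_bound`), let `b` be a solution and `Δ = b - β*`. Shrinking the
single group `b^j` does not decrease the objective, so `⟨X_{G_j} b^j, y - X b⟩ ≥ N λ_j ‖b^j‖`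
(`kkt`). Since `y - X b = W - X Δ`, Cauchy–Schwarz gives `‖X_{G_j}ᵀ X Δ‖ ≥ N λ_j / 2` whenever
`b^j ≠ 0`. Squaring, summing over these `j`, and using `‖Xᵀ u‖² ≤ N φ_max ‖u‖²`
(`transpose_bound`) gives the claim.

*The event is likely* (`group_tail` and a union bound). Diagonalising `X_{G_j} X_{G_j}ᵀ` and using
rotation invariance of the standard Gaussian turns `‖X_{G_j}ᵀ W‖² / σ²` into a weighted sum
`∑ v_i ξ_i²` of independent squares. The weights are at most `m = N ⦀Ψ_j⦀`, at most `K_j` of them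
are nonzero, and they sum to `N tr Ψ_j`. A Chernoff bound (`chernoff_weighted`) with
`x = q log M` then bounds the probability of a single failure by `M^{-q}`, hence of any failure
by `M^{1-q}`, which is even better than `2 M^{1-q}`.
-/

open MeasureTheory ProbabilityTheory Finset

noncomputable section

namespace GroupLasso

/-- Largest eigenvalue of the positive semidefinite matrix `XᵀX/N`, expressed as the
supremum of its quadratic form over unit vectors. -/
def phiMax {N M : ℕ} {Kj : Fin M → ℕ} (X : Matrix (Fin N) (GIdx Kj) ℝ) : ℝ :=
  sSup {x | ∃ v : GIdx Kj → ℝ, (∑ k, (v k) ^ 2 = 1) ∧ x = (∑ i, (X.mulVec v i) ^ 2) / N}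

/-! ### Exponential moments and tails of Gaussian quadratic forms -/

lemma integral_exp_sq_gaussian {s : ℝ} (hs : s < 1 / 2) :
    ∫ x, Real.exp (s * x ^ 2) ∂(gaussianReal 0 1) = (Real.sqrt (1 - 2 * s))⁻¹ := by
  have h1 : 0 < 1 - 2 * s := by linarith
  rw [integral_gaussianReal_eq_integral_smul one_ne_zero]
  have : ∀ x : ℝ, gaussianPDFReal 0 1 x • Real.exp (s * x ^ 2)
      = (Real.sqrt (2 * Real.pi))⁻¹ * Real.exp (-((1 - 2 * s) / 2) * x ^ 2) := by
    intro x
    rw [gaussianPDFReal_def, smul_eq_mul, mul_assoc, ← Real.exp_add]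
    simp only [NNReal.coe_one, mul_one, sub_zero]
    congr 2
    ring
  simp_rw [this]
  rw [integral_const_mul, integral_gaussian, ← Real.sqrt_inv, ← Real.sqrt_inv, ← Real.sqrt_mul (by positivity)]
  congr 1
  have := Real.pi_pos
  field_simp

lemma integrable_exp_sq_gaussian {s : ℝ} (hs : s < 1 / 2) :
    Integrable (fun x => Real.exp (s * x ^ 2)) (gaussianReal 0 1) := by
  by_contra h
  have h0 := integral_undef h
  rw [integral_exp_sq_gaussian hs] at h0
  have : 0 < Real.sqrt (1 - 2 * s) := Real.sqrt_pos.2 (by linarith)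
  exact (inv_pos.2 this).ne' h0

/-- With `y = (1 - 2a)⁻¹`, this is `log y ≤ (y - y⁻¹) / 2`, that is, `t ≤ sinh t` at
`t = log y`. -/
lemma inv_sqrt_le_exp {a : ℝ} (ha0 : 0 ≤ a) (ha : a < 1 / 2) :
    (Real.sqrt (1 - 2 * a))⁻¹ ≤ Real.exp (a + a ^ 2 / (1 - 2 * a)) := by
  have h1 : 0 < 1 - 2 * a := by linarith
  have hlog : 0 ≤ -Real.log (1 - 2 * a) := by
    have := Real.log_nonpos h1.le (by linarith); linarith
  have h2 := Real.self_le_sinh_iff.2 hlog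
  rw [Real.sinh_eq, neg_neg, Real.exp_neg, Real.exp_log h1] at h2
  have h3 : ((1 - 2 * a)⁻¹ - (1 - 2 * a)) / 2 = 2 * (a + a ^ 2 / (1 - 2 * a)) := by
    field_simp; ring
  rw [← Real.log_le_iff_le_exp (by positivity), Real.log_inv, Real.log_sqrt h1.le]
  linarith

/-- A Laurent–Massart type tail bound for a weighted sum of independent squared standard Gaussians,
in terms of the maximal weight `m`, the sum `T` of the weights, and an effective number `K` of
nonzero weights. -/
lemma chernoff_weighted {ι : Type*} [Fintype ι] (ev : ι → ℝ) (m x T : ℝ) (K : ℝ) (hm : 0 < m)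
    (hx : 0 < x) (hK : 0 < K) (hev0 : ∀ i, 0 ≤ ev i) (hevm : ∀ i, ev i ≤ m)
    (hT : ∑ i, ev i = T) (hcard : ∑ i, ev i ^ 2 ≤ K * m ^ 2) :
    (Measure.pi fun _ : ι => gaussianReal 0 1).real
      {z | T + 2 * m * (2 * x + Real.sqrt (K * x)) ≤ ∑ i, ev i * z i ^ 2} ≤ Real.exp (-x) := by
  set r := Real.sqrt x with hr
  set k := Real.sqrt K with hk
  have hr0 : 0 < r := Real.sqrt_pos.2 hx
  have hk0 : 0 < k := Real.sqrt_pos.2 hK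
  have hxr : x = r ^ 2 := (Real.sq_sqrt hx.le).symm
  have hKk : K = k ^ 2 := (Real.sq_sqrt hK.le).symm
  have hkx : Real.sqrt (K * x) = k * r := by rw [Real.sqrt_mul hK.le]
  -- The Chernoff parameter is `θ = a / m`. With this `a` the linear gain is `2 x` and the
  -- second-order cost is `x * k / (k + 2 * r) ≤ x`.
  set a := r / (k + 2 * r) with ha
  have hd : 0 < k + 2 * r := by positivity
  have ha0 : 0 < a := by positivity
  have h1a : 1 - 2 * a = k / (k + 2 * r) := by rw [ha]; field_simp; ring
  have h1a0 : 0 < 1 - 2 * a := by rw [h1a]; positivity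
  set θ := a / m with hθ
  have hθ0 : 0 < θ := by positivity
  have hle : ∀ i, θ * ev i ≤ a := fun i => by
    calc θ * ev i ≤ θ * m := by gcongr; exact hevm i
      _ = a := by rw [hθ]; field_simp
  have hlt : ∀ i, θ * ev i < 1 / 2 := fun i => by linarith [hle i]
  have hexp : (fun z : ι → ℝ => Real.exp (θ * ∑ i, ev i * z i ^ 2))
      = fun z => ∏ i, Real.exp (θ * ev i * z i ^ 2) := by
    funext z
    rw [← Real.exp_sum, Finset.mul_sum]
    simp_rw [mul_assoc]
  have hint : Integrable (fun z : ι → ℝ => Real.exp (θ * ∑ i, ev i * z i ^ 2))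
      (Measure.pi fun _ : ι => gaussianReal 0 1) := by
    rw [hexp]
    exact Integrable.fintype_prod (f := fun i y => Real.exp (θ * ev i * y ^ 2))
      fun i => integrable_exp_sq_gaussian (hlt i)
  have hmgf : mgf (fun z : ι → ℝ => ∑ i, ev i * z i ^ 2)
      (Measure.pi fun _ : ι => gaussianReal 0 1) θ
      ≤ Real.exp (θ * T + a ^ 2 * K / (1 - 2 * a)) := by
    rw [mgf, hexp, integral_fintype_prod_eq_prod (f := fun i y => Real.exp (θ * ev i * y ^ 2))]
    calc ∏ i, ∫ y, Real.exp (θ * ev i * y ^ 2) ∂(gaussianReal 0 1)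
        ≤ ∏ i, Real.exp (θ * ev i + (θ * ev i) ^ 2 / (1 - 2 * a)) := by
          refine Finset.prod_le_prod (fun i _ => integral_nonneg fun _ => (Real.exp_pos _).le) ?_
          intro i _
          rw [integral_exp_sq_gaussian (hlt i)]
          refine (inv_sqrt_le_exp (mul_nonneg hθ0.le (hev0 i)) (hlt i)).trans ?_
          gcongr
          exact hle i
      _ = Real.exp (θ * T + θ ^ 2 * (∑ i, ev i ^ 2) / (1 - 2 * a)) := by
          rw [← Real.exp_sum, Finset.sum_add_distrib, ← Finset.mul_sum, hT, ← Finset.sum_div]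
          simp_rw [mul_pow]
          rw [← Finset.mul_sum]
      _ ≤ _ := by
          have : θ ^ 2 * ∑ i, ev i ^ 2 ≤ a ^ 2 * K := by
            calc θ ^ 2 * ∑ i, ev i ^ 2 ≤ θ ^ 2 * (K * m ^ 2) := by gcongr
              _ = a ^ 2 * K := by rw [hθ]; field_simp
          gcongr Real.exp (_ + ?_ / _)
  refine (measure_ge_le_exp_mul_mgf _ hθ0.le hint).trans ?_
  calc _ ≤ Real.exp (-θ * (T + 2 * m * (2 * x + Real.sqrt (K * x)))) *
        Real.exp (θ * T + a ^ 2 * K / (1 - 2 * a)) := by gcongr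
    _ ≤ _ := by
      rw [← Real.exp_add]
      gcongr
      have e1 : θ * (2 * m * (2 * x + Real.sqrt (K * x))) = 2 * r ^ 2 := by
        rw [hkx, hxr, hθ, ha]
        field_simp
        ring
      have e2 : a ^ 2 * K / (1 - 2 * a) ≤ r ^ 2 := by
        rw [h1a, hKk, ha]
        have : (r / (k + 2 * r)) ^ 2 * k ^ 2 / (k / (k + 2 * r)) = r ^ 2 * (k / (k + 2 * r)) := by
          field_simp
        rw [this]
        have : k / (k + 2 * r) ≤ 1 := by rw [div_le_one hd]; linarith
        nlinarith [sq_nonneg r]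
      rw [hxr] at *
      linarith

open Matrix in
/-- `Y` and `Yᵀ` have the same operator norm: with `w = Yᵀ u`,
`‖w‖⁴ = ⟨u, Y w⟩² ≤ ‖u‖² · m ‖w‖²`. -/
lemma transpose_bound {ι κ : Type*} [Fintype ι] [Fintype κ] (Y : Matrix ι κ ℝ) {m : ℝ} (hm : 0 ≤ m)
    (h : ∀ v : κ → ℝ, ∑ i, (Y *ᵥ v) i ^ 2 ≤ m * ∑ k, v k ^ 2) (u : ι → ℝ) :
    ∑ k, (Yᵀ *ᵥ u) k ^ 2 ≤ m * ∑ i, u i ^ 2 := by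
  set w := Yᵀ *ᵥ u with hw
  have h1 : ∑ k, w k ^ 2 = ∑ i, u i * (Y *ᵥ w) i := by
    have : w ⬝ᵥ w = u ⬝ᵥ (Y *ᵥ w) := by
      rw [dotProduct_mulVec, ← Matrix.mulVec_transpose, transpose_transpose, dotProduct_comm]
    simpa [dotProduct, sq] using this
  have h2 := Finset.sum_mul_sq_le_sq_mul_sq Finset.univ u (Y *ᵥ w)
  rw [← h1] at h2
  have h3 := h w
  have hu : 0 ≤ ∑ i, u i ^ 2 := Finset.sum_nonneg fun _ _ => sq_nonneg _
  have hw0 : 0 ≤ ∑ k, w k ^ 2 := Finset.sum_nonneg fun _ _ => sq_nonneg _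
  rcases hw0.eq_or_lt with h0 | h0
  · rw [← h0]; positivity
  · have h4 := h2.trans (mul_le_mul_of_nonneg_left h3 hu)
    by_contra hneg
    push Not at hneg
    nlinarith

open Matrix in
/-- The tail of `‖Yᵀ ξ‖²` for a standard Gaussian vector `ξ`, obtained from `chernoff_weighted` by
diagonalising `Y Yᵀ`. -/
lemma chisq_tail {N K : ℕ} (hK : 1 ≤ K) (Y : Matrix (Fin N) (Fin K) ℝ) {m x : ℝ} (hm : 0 ≤ m)
    (hx : 0 < x) (h : ∀ v : Fin K → ℝ, ∑ i, (Y *ᵥ v) i ^ 2 ≤ m * ∑ k, v k ^ 2) :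
    (Measure.pi fun _ : Fin N => gaussianReal 0 1).real
      {z | ∑ t, ∑ i, Y i t ^ 2 + 2 * m * (2 * x + Real.sqrt (K * x)) < ∑ t, (Yᵀ *ᵥ z) t ^ 2}
      ≤ Real.exp (-x) := by
  have hbd := transpose_bound Y hm h
  rcases hm.eq_or_lt with h0 | hm0
  · -- `m = 0` forces `Yᵀ z = 0`, so the event is empty
    have : {z | ∑ t, ∑ i, Y i t ^ 2 + 2 * m * (2 * x + Real.sqrt (K * x))
        < ∑ t, (Yᵀ *ᵥ z) t ^ 2} = ∅ := by
      ext z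
      simp only [Set.mem_ofPred_eq, Set.mem_empty_iff_false, iff_false, not_lt]
      refine (hbd z).trans ?_
      rw [← h0, mul_zero, zero_mul, zero_mul, add_zero]
      positivity
    rw [this, measureReal_empty]
    exact (Real.exp_pos _).le
  have hA : (Y * Yᵀ).IsHermitian := by simpa using Matrix.isHermitian_mul_conjTranspose_self Y
  set ev := hA.eigenvalues
  set b := hA.eigenvectorBasis
  have hquad : ∀ z : Fin N → ℝ, ∑ t, (Yᵀ *ᵥ z) t ^ 2 = z ⬝ᵥ ((Y * Yᵀ) *ᵥ z) := by
    intro z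
    rw [← Matrix.mulVec_mulVec, dotProduct_mulVec, ← Matrix.mulVec_transpose]
    simp [dotProduct, sq]
  have hbb : ∀ i j, (b i : Fin N → ℝ) ⬝ᵥ (b j : Fin N → ℝ) = if i = j then 1 else 0 := by
    intro i j
    have := orthonormal_iff_ite.1 b.orthonormal j i
    rw [EuclideanSpace.inner_eq_star_dotProduct] at this
    simpa [eq_comm] using this
  have hev_eq : ∀ i, ∑ t, (Yᵀ *ᵥ (b i : Fin N → ℝ)) t ^ 2 = ev i := by
    intro i
    rw [hquad, hA.mulVec_eigenvectorBasis, dotProduct_smul, hbb]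
    simp [ev]
  have hev0 : ∀ i, 0 ≤ ev i := fun i => by rw [← hev_eq]; positivity
  have hevm : ∀ i, ev i ≤ m := fun i => by
    rw [← hev_eq]
    refine (hbd _).trans_eq ?_
    have := hbb i i
    simp only [dotProduct, if_true, ← sq] at this
    rw [this, mul_one]
  have hT : ∑ i, ev i = ∑ t, ∑ i, Y i t ^ 2 := by
    have := hA.trace_eq_sum_eigenvalues
    simp only [RCLike.ofReal_real_eq_id, id] at this
    rw [← this, Finset.sum_comm]
    simp [Matrix.trace, Matrix.mul_apply, sq]
  -- `rank (Y Yᵀ) ≤ K`, so at most `K` of the `N` eigenvalues are nonzero.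
  have hsq : ∑ i, ev i ^ 2 ≤ (K : ℝ) * m ^ 2 := by
    have hrank : #{i | ev i ≠ 0} ≤ K := by
      have h1 := hA.rank_eq_card_non_zero_eigs
      rw [Fintype.card_subtype] at h1
      rw [← h1]
      exact (Matrix.rank_mul_le_left _ _).trans (by simpa using Y.rank_le_card_width)
    calc ∑ i, ev i ^ 2 = ∑ i with ev i ≠ 0, ev i ^ 2 := by
          rw [Finset.sum_filter_of_ne]
          intro i _ hi h0
          simp [h0] at hi
      _ ≤ ∑ i with ev i ≠ 0, m ^ 2 := by
          gcongr with i
          · exact hev0 i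
          · exact hevm i
      _ ≤ _ := by
          rw [Finset.sum_const, nsmul_eq_mul]
          gcongr
  -- Rotation invariance: i.i.d. coordinates in the eigenbasis give the same law.
  have hlaw : (Measure.pi fun _ : Fin N => gaussianReal 0 1) =
      (Measure.pi fun _ : Fin N => gaussianReal 0 1).map
        (fun z => WithLp.ofLp (∑ i, z i • b i)) := by
    have h1 := map_pi_eq_stdGaussian (ι := Fin N)
    rw [stdGaussian_eq_map_pi_orthonormalBasis b] at h1
    have h2 := congrArg (Measure.map (WithLp.ofLp)) h1
    rw [Measure.map_map (by fun_prop) (by fun_prop), Measure.map_map (by fun_prop) (by fun_prop)]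
      at h2
    simpa [Function.comp_def, Measure.map_id'] using h2
  have hdiag : ∀ z : Fin N → ℝ,
      ∑ t, (Yᵀ *ᵥ (WithLp.ofLp (∑ i, z i • b i))) t ^ 2 = ∑ i, ev i * z i ^ 2 := by
    intro z
    rw [hquad]
    have e : WithLp.ofLp (∑ i, z i • b i) = ∑ i, z i • (b i : Fin N → ℝ) := by simp
    rw [e, Matrix.mulVec_sum]
    simp_rw [Matrix.mulVec_smul, b, hA.mulVec_eigenvectorBasis]
    rw [sum_dotProduct]
    simp_rw [dotProduct_sum, smul_dotProduct, dotProduct_smul]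
    simp [b] at hbb
    simp [hbb, ev]
    refine Finset.sum_congr rfl fun i _ => ?_
    ring
  rw [hlaw, map_measureReal_apply (by fun_prop)]
  · refine le_trans (measureReal_mono ?_) (chernoff_weighted ev m x _ K hm0 hx
      (by exact_mod_cast hK) hev0 hevm hT hsq)
    intro z hz
    simp only [Set.mem_preimage, Set.mem_ofPred_eq, hdiag] at hz
    exact hz.le
  · refine measurableSet_lt (by fun_prop) ?_
    simp only [Matrix.mulVec, dotProduct]
    fun_prop
/-! ### The suprema `specPsi` and `phiMax` as bounds on quadratic forms -/

/-- Every quadratic form `‖Yv‖²` is dominated by a multiple of `‖v‖²`; this makes the suprema in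
`specPsi` and `phiMax` finite. -/
lemma frobenius_bound {ι κ : Type*} [Fintype ι] [Fintype κ] (Y : Matrix ι κ ℝ) (v : κ → ℝ) :
    ∑ i, (Y.mulVec v i) ^ 2 ≤ (∑ i, ∑ k, Y i k ^ 2) * ∑ k, v k ^ 2 := by
  rw [Finset.sum_mul]
  exact Finset.sum_le_sum fun i _ => Finset.sum_mul_sq_le_sq_mul_sq _ _ _

/-- By homogeneity, a bound on unit multiples of `v` extends to `v`. -/
lemma quad_le_of_unit {ι κ : Type*} [Fintype ι] [Fintype κ] (Y : Matrix ι κ ℝ) (v : κ → ℝ) {m : ℝ}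
    (h : ∀ c : ℝ, ∑ k, (c * v k) ^ 2 = 1 → ∑ i, (Y.mulVec (fun k => c * v k) i) ^ 2 ≤ m) :
    ∑ i, (Y.mulVec v i) ^ 2 ≤ m * ∑ k, v k ^ 2 := by
  have h0 : 0 ≤ ∑ k, v k ^ 2 := by positivity
  rcases h0.eq_or_lt with h1 | h1
  · have := frobenius_bound Y v
    rw [← h1, mul_zero] at this ⊢
    exact this
  · set S := ∑ k, v k ^ 2
    have hc : ((Real.sqrt S)⁻¹) ^ 2 = S⁻¹ := by rw [inv_pow, Real.sq_sqrt h0]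
    have h2 := h (Real.sqrt S)⁻¹ (by
      simp_rw [mul_pow]
      rw [← Finset.mul_sum, hc]
      exact inv_mul_cancel₀ h1.ne')
    have e : (fun k => (Real.sqrt S)⁻¹ * v k) = (Real.sqrt S)⁻¹ • v := rfl
    rw [e, Matrix.mulVec_smul] at h2
    simp only [Pi.smul_apply, smul_eq_mul, mul_pow] at h2
    rw [← Finset.mul_sum, hc, inv_mul_le_iff₀ h1] at h2
    linarith

section
variable {N M : ℕ} {Kj : Fin M → ℕ}

lemma phiMax_bound (hN : 1 ≤ N) (X : Matrix (Fin N) (GIdx Kj) ℝ) (v : GIdx Kj → ℝ) :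
    ∑ i, (X.mulVec v i) ^ 2 ≤ (N * phiMax X) * ∑ k, v k ^ 2 := by
  have hN0 : (0 : ℝ) < N := by exact_mod_cast hN
  refine quad_le_of_unit X v fun c hc => ?_
  rw [← div_le_iff₀' hN0]
  refine le_csSup ⟨(∑ i, ∑ k, X i k ^ 2) / N, ?_⟩ ⟨_, hc, rfl⟩
  rintro _ ⟨w, hw, rfl⟩
  have := frobenius_bound X w
  rw [hw, mul_one] at this
  gcongr

lemma phiMax_nonneg (X : Matrix (Fin N) (GIdx Kj) ℝ) : 0 ≤ phiMax X :=
  Real.sSup_nonneg (by rintro _ ⟨w, -, rfl⟩; positivity)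

lemma specPsi_nonneg (X : Matrix (Fin N) (GIdx Kj) ℝ) (j : Fin M) : 0 ≤ specPsi X j :=
  Real.sSup_nonneg (by rintro _ ⟨w, -, -, rfl⟩; positivity)

/-- The submatrix `X_{G_j}`. -/
def grpMat (X : Matrix (Fin N) (GIdx Kj) ℝ) (j : Fin M) : Matrix (Fin N) (Fin (Kj j)) ℝ :=
  X.submatrix id fun t => ⟨j, t⟩

/-- The vector supported on group `j` with entries `v` there. -/
def extGrp (j : Fin M) (v : Fin (Kj j) → ℝ) : GIdx Kj → ℝ :=
  fun k => if h : k.1 = j then v (h ▸ k.2) else 0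

@[simp] lemma extGrp_same (j : Fin M) (v : Fin (Kj j) → ℝ) (t : Fin (Kj j)) :
    extGrp j v ⟨j, t⟩ = v t := by simp [extGrp]

lemma extGrp_ne (j : Fin M) (v : Fin (Kj j) → ℝ) (k : GIdx Kj) (hk : k.1 ≠ j) :
    extGrp j v k = 0 := by simp [extGrp, hk]

lemma sum_group (j : Fin M) (f : GIdx Kj → ℝ) (hf : ∀ k : GIdx Kj, k.1 ≠ j → f k = 0) :
    ∑ k, f k = ∑ t, f ⟨j, t⟩ := by
  rw [Fintype.sum_sigma]
  refine Finset.sum_eq_single j (fun l _ hl => ?_) (by simp)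
  exact Finset.sum_eq_zero fun t _ => hf _ hl

lemma mulVec_extGrp (X : Matrix (Fin N) (GIdx Kj) ℝ) (j : Fin M) (v : Fin (Kj j) → ℝ) :
    X.mulVec (extGrp j v) = (grpMat X j).mulVec v := by
  ext i
  simp only [Matrix.mulVec, dotProduct]
  rw [sum_group j _ fun k hk => by rw [extGrp_ne j v k hk, mul_zero]]
  simp [grpMat]

lemma specPsi_bound (hN : 1 ≤ N) (X : Matrix (Fin N) (GIdx Kj) ℝ) (j : Fin M)
    (v : Fin (Kj j) → ℝ) :
    ∑ i, ((grpMat X j).mulVec v i) ^ 2 ≤ (N * specPsi X j) * ∑ k, v k ^ 2 := by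
  have hN0 : (0 : ℝ) < N := by exact_mod_cast hN
  refine quad_le_of_unit _ v fun c hc => ?_
  rw [← div_le_iff₀' hN0, ← mulVec_extGrp]
  refine le_csSup ⟨(∑ i, ∑ k, X i k ^ 2) / N, ?_⟩ ⟨extGrp j _, extGrp_ne j _, ?_, rfl⟩
  · rintro _ ⟨w, -, hw, rfl⟩
    have := frobenius_bound X w
    rw [hw, mul_one] at this
    exact div_le_div_of_nonneg_right this hN0.le
  · rw [sum_group j _ fun k hk => by rw [extGrp_ne j _ k hk]; norm_num]
    simpa using hc

/-! ### The deterministic half -/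

/-- First-order optimality of a solution `b` tested against the direction `b^j`: shrinking the
group `b^j` by a small factor cannot decrease the objective. -/
lemma kkt (hN : 1 ≤ N) (X : Matrix (Fin N) (GIdx Kj) ℝ) (y : Fin N → ℝ) (lam : Fin M → ℝ)
    (b : GIdx Kj → ℝ) (hb : IsGLSol X y lam b) (j : Fin M) :
    N * lam j * gnorm b j ≤
      ∑ i, (grpMat X j).mulVec (fun t => b ⟨j, t⟩) i * (y i - X.mulVec b i) := by
  have hN0 : (0 : ℝ) < N := by exact_mod_cast hN
  set u := (grpMat X j).mulVec (fun t => b ⟨j, t⟩) with hu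
  set P := ∑ i, u i * (y i - X.mulVec b i) with hP
  set Q := ∑ i, u i ^ 2 with hQ
  have hQ0 : 0 ≤ Q := by positivity
  have key : ∀ s : ℝ, 0 < s → s ≤ 1 → N * lam j * gnorm b j ≤ P + s * Q := by
    intro s hs hs1
    have h := hb (b - s • extGrp j fun t => b ⟨j, t⟩)
    have hX : X.mulVec (b - s • extGrp j fun t => b ⟨j, t⟩) = X.mulVec b - s • u := by
      rw [Matrix.mulVec_sub, Matrix.mulVec_smul, mulVec_extGrp]
    have hg : ∀ l, gnorm (b - s • extGrp j fun t => b ⟨j, t⟩) l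
        = gnorm b l - if l = j then s * gnorm b j else 0 := by
      intro l
      by_cases hl : l = j
      · subst hl
        simp only [gnorm, Pi.sub_apply, Pi.smul_apply, extGrp_same, smul_eq_mul, if_true]
        have : ∀ t, (b ⟨l, t⟩ - s * b ⟨l, t⟩) ^ 2 = (1 - s) ^ 2 * b ⟨l, t⟩ ^ 2 := fun t => by ring
        simp_rw [this]
        rw [← Finset.mul_sum, Real.sqrt_mul (sq_nonneg _), Real.sqrt_sq (by linarith)]
        ring
      · simp only [gnorm, Pi.sub_apply, Pi.smul_apply, smul_eq_mul, if_neg hl, sub_zero]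
        congr 1
        refine Finset.sum_congr rfl fun t _ => ?_
        rw [extGrp_ne j _ ⟨l, t⟩ hl]; ring
    simp only [glObj, hX, hg, mul_sub, Finset.sum_sub_distrib, mul_ite, mul_zero,
      Finset.sum_ite_eq', Finset.mem_univ, if_true] at h
    have e : ∑ i, ((X.mulVec b - s • u) i - y i) ^ 2
        = ∑ i, (X.mulVec b i - y i) ^ 2 + 2 * s * P + s ^ 2 * Q := by
      rw [hP, hQ, Finset.mul_sum, Finset.mul_sum, ← Finset.sum_add_distrib,
        ← Finset.sum_add_distrib]
      refine Finset.sum_congr rfl fun i _ => ?_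
      simp only [Pi.sub_apply, Pi.smul_apply, smul_eq_mul]
      ring
    rw [e, add_div, add_div] at h
    have h' : 2 * (lam j * (s * gnorm b j)) ≤ 2 * s * P / N + s ^ 2 * Q / N := by linarith
    rw [← add_div, le_div_iff₀ hN0] at h'
    have h'' : s * (2 * (N * lam j * gnorm b j)) ≤ s * (2 * P + s * Q) := by linarith
    have h3 := le_of_mul_le_mul_left h'' hs
    nlinarith [mul_nonneg hs.le hQ0]
  -- let `s → 0⁺`
  refine le_of_forall_pos_le_add fun ε hε => ?_
  have hs : 0 < min 1 (ε / (Q + 1)) := by positivity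
  refine (key _ hs (min_le_left _ _)).trans ?_
  gcongr
  calc min 1 (ε / (Q + 1)) * Q ≤ ε / (Q + 1) * (Q + 1) := by
        gcongr
        · exact min_le_right _ _
        · linarith
    _ = ε := by field_simp

/-- Cauchy–Schwarz for `⟨X_{G_j} b^j, w⟩ = ⟨b^j, X_{G_j}ᵀ w⟩`. -/
lemma grp_correlation_le (X : Matrix (Fin N) (GIdx Kj) ℝ) (j : Fin M) (b : GIdx Kj → ℝ)
    (w : Fin N → ℝ) :
    ∑ i, (grpMat X j).mulVec (fun t => b ⟨j, t⟩) i * w i ≤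
      gnorm b j * Real.sqrt (∑ t, ((grpMat X j).transpose.mulVec w t) ^ 2) := by
  have e : ∑ i, (grpMat X j).mulVec (fun t => b ⟨j, t⟩) i * w i
      = ∑ t, b ⟨j, t⟩ * (grpMat X j).transpose.mulVec w t := by
    have := Matrix.dotProduct_mulVec (fun t => b ⟨j, t⟩) (grpMat X j).transpose w
    rw [Matrix.vecMul_transpose] at this
    exact this.symm
  rw [e]
  exact Real.sum_mul_le_sqrt_mul_sqrt _ _ _

/-- The deterministic half: on the event that all group noise correlations satisfy
`‖X_{G_j}ᵀ W‖ ≤ N λ_j / 2`, the sparsity bound holds. -/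
lemma deterministic_bound (hM : 2 ≤ M) (hN : 1 ≤ N) (X : Matrix (Fin N) (GIdx Kj) ℝ)
    (βstar : GIdx Kj → ℝ) (w : Fin N → ℝ) (lam : Fin M → ℝ) (hlam_pos : ∀ j, 0 < lam j)
    (hw : ∀ j, ∑ t, ((grpMat X j).transpose.mulVec w t) ^ 2 ≤ (N * lam j / 2) ^ 2)
    (b : GIdx Kj → ℝ) (hb : IsGLSol X (fun i => X.mulVec βstar i + w i) lam b) :
    ((Finset.univ.filter (fun j => gnorm b j ≠ 0)).card : ℝ) ≤
      4 * phiMax X / ((sInf (Set.range lam)) ^ 2 * N) *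
        ∑ i, (X.mulVec (b - βstar) i) ^ 2 := by
  have hN0 : (0 : ℝ) < N := by exact_mod_cast hN
  have : Nonempty (Fin M) := ⟨⟨0, by omega⟩⟩
  set L := sInf (Set.range lam) with hL
  have hLle : ∀ j, L ≤ lam j := fun j =>
    csInf_le (Set.finite_range lam).bddBelow ⟨j, rfl⟩
  have hL0 : 0 < L := by
    obtain ⟨j, hj⟩ := (Set.range_nonempty lam).csInf_mem (Set.finite_range lam)
    rw [hL, ← hj]; exact hlam_pos j
  set D := X.mulVec (b - βstar) with hD
  have hgrp : ∀ j, gnorm b j ≠ 0 →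
      (N * L / 2) ^ 2 ≤ ∑ t, ((grpMat X j).transpose.mulVec D t) ^ 2 := by
    intro j hj
    have hg : 0 < gnorm b j := lt_of_le_of_ne (Real.sqrt_nonneg _) (Ne.symm hj)
    have h1 := kkt hN X _ lam b hb j
    have hr : ∀ i, X.mulVec βstar i + w i - X.mulVec b i = w i + (-D) i := by
      intro i
      rw [hD, Matrix.mulVec_sub]
      simp only [Pi.neg_apply, Pi.sub_apply]
      ring
    simp only [hr, mul_add, Finset.sum_add_distrib] at h1
    have h2 := grp_correlation_le X j b w
    have h3 := grp_correlation_le X j b (-D)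
    simp only [Matrix.mulVec_neg, Pi.neg_apply, neg_sq] at h3
    simp only [Pi.neg_apply] at h1
    have hlN : 0 ≤ N * lam j / 2 := by have := hlam_pos j; positivity
    have h4 : Real.sqrt (∑ t, ((grpMat X j).transpose.mulVec w t) ^ 2) ≤ N * lam j / 2 :=
      Real.sqrt_le_iff.2 ⟨hlN, hw j⟩
    have h5 : gnorm b j * (N * lam j / 2) ≤
        gnorm b j * Real.sqrt (∑ t, ((grpMat X j).transpose.mulVec D t) ^ 2) := by
      have := mul_le_mul_of_nonneg_left h4 hg.le
      linarith
    have h6 := le_of_mul_le_mul_left h5 hg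
    calc (N * L / 2) ^ 2 ≤ (N * lam j / 2) ^ 2 := by gcongr; exact hLle j
      _ ≤ _ := (Real.le_sqrt hlN (by positivity)).1 h6
  have hsum : ((Finset.univ.filter (fun j => gnorm b j ≠ 0)).card : ℝ) * (N * L / 2) ^ 2 ≤
      (N * phiMax X) * ∑ i, D i ^ 2 := by
    calc _ = ∑ j with gnorm b j ≠ 0, (N * L / 2) ^ 2 := by rw [Finset.sum_const, nsmul_eq_mul]
      _ ≤ ∑ j with gnorm b j ≠ 0, ∑ t, ((grpMat X j).transpose.mulVec D t) ^ 2 :=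
          Finset.sum_le_sum fun j hj => hgrp j (Finset.mem_filter.1 hj).2
      _ ≤ ∑ j, ∑ t, ((grpMat X j).transpose.mulVec D t) ^ 2 :=
          Finset.sum_le_sum_of_subset_of_nonneg (Finset.filter_subset _ _)
            fun j _ _ => by positivity
      _ = ∑ k, (X.transpose.mulVec D k) ^ 2 := by rw [Fintype.sum_sigma]; rfl
      _ ≤ _ := transpose_bound X (mul_nonneg hN0.le (phiMax_nonneg X)) (phiMax_bound hN X) D
  rw [div_mul_eq_mul_div, le_div_iff₀ (by positivity)]
  have : (N : ℝ) * (((Finset.univ.filter (fun j => gnorm b j ≠ 0)).card : ℝ) * (L ^ 2 * N)) ≤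
      N * (4 * phiMax X * ∑ i, D i ^ 2) := by linarith
  exact le_of_mul_le_mul_left this hN0

/-! ### The probabilistic half -/

/-- The tail bound for one group, at noise level `σ`. -/
lemma group_tail (hM : 2 ≤ M) (hN : 1 ≤ N) (X : Matrix (Fin N) (GIdx Kj) ℝ) (j : Fin M)
    (hKj : 1 ≤ Kj j) {σ q l : ℝ} (hσ : 0 < σ) (hq : 1 < q)
    (hlam : 2 * σ / Real.sqrt N *
      Real.sqrt (trPsi X j + 2 * specPsi X j *
        (2 * q * Real.log M + Real.sqrt (Kj j * q * Real.log M))) ≤ l) :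
    (Measure.pi fun _ : Fin N => gaussianReal 0 (σ ^ 2).toNNReal).real
      {z | (N * l / 2) ^ 2 < ∑ t, ((grpMat X j).transpose.mulVec z t) ^ 2}
      ≤ (M : ℝ) ^ (-q) := by
  have hN0 : (0 : ℝ) < N := by exact_mod_cast hN
  have hM0 : (0 : ℝ) < M := by positivity
  have hlog : 0 < Real.log M := Real.log_pos (by exact_mod_cast hM)
  have hscale : (Measure.pi fun _ : Fin N => gaussianReal 0 (σ ^ 2).toNNReal) =
      (Measure.pi fun _ : Fin N => gaussianReal 0 1).map (fun z i => σ * z i) := by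
    have h1 : (gaussianReal 0 1).map (fun x => σ * x) = gaussianReal 0 (σ ^ 2).toNNReal := by
      rw [gaussianReal_map_const_mul, mul_zero, mul_one]
      congr 1
      ext
      simp [sq_nonneg]
    have h2 := Measure.pi_map_pi (μ := fun _ : Fin N => gaussianReal 0 1)
      (f := fun _ x => σ * x) (fun _ => by fun_prop)
    rw [h2]
    simp_rw [h1]
  have htail := chisq_tail hKj (grpMat X j) (mul_nonneg hN0.le (specPsi_nonneg X j))
    (mul_pos (by linarith : 0 < q) hlog) (specPsi_bound hN X j)
  have hexp : Real.exp (-(q * Real.log M)) = (M : ℝ) ^ (-q) := by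
    rw [Real.rpow_def_of_pos hM0]; ring_nf
  rw [hexp] at htail
  rw [hscale, map_measureReal_apply (by fun_prop)]
  · refine le_trans (measureReal_mono ?_) htail
    intro z hz
    simp only [Set.mem_preimage, Set.mem_ofPred_eq] at hz ⊢
    have e : (fun i => σ * z i) = σ • z := rfl
    rw [e, Matrix.mulVec_smul] at hz
    simp only [Pi.smul_apply, smul_eq_mul, mul_pow] at hz
    rw [← Finset.mul_sum] at hz
    have htr : ∑ t, ∑ i, grpMat X j i t ^ 2 = N * trPsi X j := by
      rw [trPsi, mul_div_cancel₀ _ hN0.ne']; rfl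
    have htr0 : 0 ≤ trPsi X j := by unfold trPsi; positivity
    have hsp := specPsi_nonneg X j
    rw [htr]
    set R := trPsi X j + 2 * specPsi X j *
        (2 * q * Real.log M + Real.sqrt (Kj j * q * Real.log M)) with hR
    have hR0 : 0 ≤ R := by positivity
    have h3 : σ ^ 2 * (N * R) ≤ N ^ 2 * l ^ 2 / 2 ^ 2 := by
      have h4 := pow_le_pow_left₀ (by positivity) hlam 2
      rw [mul_pow, div_pow, Real.sq_sqrt hR0, Real.sq_sqrt hN0.le, div_mul_eq_mul_div,
        div_le_iff₀ hN0] at h4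
      have h5 := mul_le_mul_of_nonneg_left h4 hN0.le
      linarith
    have h6 := h3.trans_lt (by rw [← mul_pow, ← div_pow]; simpa [mul_pow, div_pow] using hz)
    have h7 := lt_of_mul_lt_mul_left h6 (by positivity)
    refine lt_of_eq_of_lt ?_ h7
    rw [hR, ← mul_assoc (Kj j : ℝ) q]
    ring
  · refine measurableSet_lt (by fun_prop) ?_
    simp only [Matrix.mulVec, dotProduct]
    fun_prop

end

/-- with probability at least `1 − 2M^{1−q}`, every Group Lasso solution `β̂`
satisfies `M(β̂) ≤ (4 φ_max)/(λ_min² N) · ‖X(β̂ − β*)‖²`. -/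
theorem group_lasso_sparsity_bound
    {N M : ℕ} {Kj : Fin M → ℕ} (hM : 2 ≤ M) (hN : 1 ≤ N) (hKj : ∀ j, 1 ≤ Kj j)
    (X : Matrix (Fin N) (GIdx Kj) ℝ) (βstar : GIdx Kj → ℝ)
    {Ω : Type*} [MeasurableSpace Ω] (μ : Measure Ω) [IsProbabilityMeasure μ]
    (W : Ω → Fin N → ℝ) (σ : ℝ) (hσ : 0 < σ)
    (hW : Measure.map W μ = Measure.pi fun _ : Fin N => gaussianReal 0 (σ ^ 2).toNNReal)
    (q : ℝ) (hq : 1 < q) (lam : Fin M → ℝ) (hlam_pos : ∀ j, 0 < lam j)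
    (hlam : ∀ j, 2 * σ / Real.sqrt N *
      Real.sqrt (trPsi X j + 2 * specPsi X j *
        (2 * q * Real.log M + Real.sqrt (Kj j * q * Real.log M))) ≤ lam j)
    :
    ∃ A : Set Ω, MeasurableSet A ∧ 1 - 2 * (M : ℝ) ^ ((1 : ℝ) - q) ≤ (μ A).toReal ∧
      ∀ ω ∈ A, ∀ b : GIdx Kj → ℝ,
        IsGLSol X (fun i => X.mulVec βstar i + W ω i) lam b →
        ((Finset.univ.filter (fun j => gnorm b j ≠ 0)).card : ℝ) ≤
          4 * phiMax X / ((sInf (Set.range lam)) ^ 2 * N) *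
            ∑ i, (X.mulVec (b - βstar) i) ^ 2 := by
  set ν := Measure.pi fun _ : Fin N => gaussianReal 0 (σ ^ 2).toNNReal with hν
  have hM0 : (0 : ℝ) < M := by positivity
  let bad : Fin M → Set (Fin N → ℝ) := fun j =>
    {z | (N * lam j / 2) ^ 2 < ∑ t, ((grpMat X j).transpose.mulVec z t) ^ 2}
  have hbad : ∀ j, MeasurableSet (bad j) := fun j => by
    refine measurableSet_lt (by fun_prop) ?_
    simp only [Matrix.mulVec, dotProduct]
    fun_prop
  have hU : MeasurableSet (⋃ j, bad j) := MeasurableSet.iUnion hbad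
  have hunion : ν.real (⋃ j, bad j) ≤ (M : ℝ) ^ ((1 : ℝ) - q) := by
    calc ν.real (⋃ j, bad j) ≤ ∑ j, ν.real (bad j) := measureReal_iUnion_fintype_le _
      _ ≤ ∑ _j : Fin M, (M : ℝ) ^ (-q) := Finset.sum_le_sum fun j _ =>
          group_tail hM hN X j (hKj j) hσ hq (hlam j)
      _ = (M : ℝ) ^ ((1 : ℝ) - q) := by
          rw [Finset.sum_const, nsmul_eq_mul, Finset.card_univ, Fintype.card_fin, sub_eq_add_neg,
            Real.rpow_add hM0, Real.rpow_one]
  -- the law of `W` is nonzero, so `W` is a.e.-measurable and not a junk pushforward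
  have hWm : AEMeasurable W μ := by
    refine AEMeasurable.of_map_ne_zero ?_
    rw [hW]
    exact IsProbabilityMeasure.ne_zero ν
  -- `W` need only be a.e.-measurable, so the preimage of the good set is merely null-measurable
  -- and is replaced by a measurable subset of full measure in it.
  obtain ⟨A, hAsub, hAm, hAeq⟩ :=
    (hWm.nullMeasurable hU.compl).exists_measurable_subset_ae_eq
  refine ⟨A, hAm, ?_, ?_⟩
  · have h1 : (μ A).toReal = ν.real (⋃ j, bad j)ᶜ := by
      rw [measure_congr hAeq, ← Measure.map_apply_of_aemeasurable hWm hU.compl, hW]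
      rfl
    rw [h1, probReal_compl_eq_one_sub hU]
    have : 0 ≤ (M : ℝ) ^ ((1 : ℝ) - q) := by positivity
    linarith
  · intro ω hω b hb
    refine deterministic_bound hM hN X βstar (W ω) lam hlam_pos (fun j => ?_) b hb
    have h1 := hAsub hω
    simp only [Set.mem_preimage, Set.mem_compl_iff, Set.mem_iUnion, not_exists] at h1
    exact not_lt.1 (h1 j)

end GroupLasso
end
end
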